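/- arXiv:1606.08034 — 3 statements merged into one kernel-verified Lean document; each statement's English description precedes it below -/
import Mathlib

section
/- Let G be a group, J an abelian group with an action of G by group automorphisms, A and B two G-stable subgroups of J, and n ≥ 1 an integer. Assume that (i) B is n-divisible; (ii) the n-torsion subgroup B[n] is contained in A ∩ B and A ∩ B is finite; (iii) (B^G)[n] = 0; and (iv) ((J/B)^G)[n] = 0. Then there is a well-defined group homomorphism φ : B^G / n·B^G → ker(H^1(G, A) → H^1(G, J)) sending the class of x ∈ B^G to the cohomology class of the 1-cocycle σ ↦ σ·y − y, where y ∈ B is any element with n·y = x. Moreover, the kernel of φ is isomorphic to a subgroup of J^G/(A^G + B^G); in particular, φ is injective whenever J^G = A^G + B^G. -/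
section VisibilityFramework

variable (G : Type) [Group G] (J : Type) [AddCommGroup J] [DistribMulAction G J]

/-- The 1-cocycles of `G` with values in the subgroup `A` of `J`. -/
def oneCocycles (A : AddSubgroup J) : AddSubgroup (G → J) where
  carrier := {f | (∀ σ, f σ ∈ A) ∧ ∀ σ τ, f (σ * τ) = f σ + σ • f τ}
  zero_mem' := ⟨fun _ => A.zero_mem, by simp⟩
  add_mem' := by
    rintro f g ⟨hfA, hf⟩ ⟨hgA, hg⟩
    refine ⟨fun σ => A.add_mem (hfA σ) (hgA σ), fun σ τ => ?_⟩
    simp only [Pi.add_apply, hf σ τ, hg σ τ, smul_add]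
    abel
  neg_mem' := by
    rintro f ⟨hfA, hf⟩
    refine ⟨fun σ => A.neg_mem (hfA σ), fun σ τ => ?_⟩
    simp only [Pi.neg_apply, hf σ τ, smul_neg]
    abel

/-- The 1-coboundaries of `G` with values in the subgroup `A` of `J`:
maps of the form `σ ↦ σ • a - a` for some `a ∈ A`. -/
def oneCoboundaries (A : AddSubgroup J) : AddSubgroup (G → J) where
  carrier := {f | ∃ a ∈ A, ∀ σ, f σ = σ • a - a}
  zero_mem' := ⟨0, A.zero_mem, by simp⟩
  add_mem' := by
    rintro f g ⟨a, ha, hf⟩ ⟨b, hb, hg⟩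
    refine ⟨a + b, A.add_mem ha hb, fun σ => ?_⟩
    simp only [Pi.add_apply, hf σ, hg σ, smul_add]
    abel
  neg_mem' := by
    rintro f ⟨a, ha, hf⟩
    refine ⟨-a, A.neg_mem ha, fun σ => ?_⟩
    simp only [Pi.neg_apply, hf σ, smul_neg]
    abel

/-- The first group cohomology `H¹(G, A)` of `G` with coefficients in the `G`-stable
subgroup `A` of `J`, defined as 1-cocycles modulo 1-coboundaries. -/
def H1 (A : AddSubgroup J) : Type :=
  (oneCocycles G J A) ⧸ ((oneCoboundaries G J A).addSubgroupOf (oneCocycles G J A))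

noncomputable instance (A : AddSubgroup J) : AddCommGroup (H1 G J A) :=
  QuotientAddGroup.Quotient.addCommGroup _

/-- The class in `H¹(G, A)` of a 1-cocycle. -/
def H1π (A : AddSubgroup J) (f : oneCocycles G J A) : H1 G J A :=
  QuotientAddGroup.mk f

/-- The map on 1-cocycles induced by an inclusion `A ≤ A'` of subgroups of `J`. -/
def oneCocyclesMap {A A' : AddSubgroup J} (h : A ≤ A') :
    oneCocycles G J A →+ oneCocycles G J A' where
  toFun f := ⟨(f : G → J), ⟨fun σ => h (f.2.1 σ), f.2.2⟩⟩
  map_zero' := rfl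
  map_add' _ _ := rfl

/-- The map `H¹(G, A) → H¹(G, A')` induced by an inclusion `A ≤ A'`. -/
noncomputable def H1map {A A' : AddSubgroup J} (h : A ≤ A') : H1 G J A →+ H1 G J A' :=
  QuotientAddGroup.map _ _ (oneCocyclesMap G J h)
    (by
      rintro ⟨f, hf⟩ hmem
      obtain ⟨a, ha, hfa⟩ := hmem
      exact ⟨a, h ha, hfa⟩)

/-- The subgroup of `G`-fixed points of `J`. -/
def fixedAddSubgroup : AddSubgroup J where
  carrier := {x | ∀ g : G, g • x = x}
  zero_mem' := fun g => smul_zero g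
  add_mem' := by
    intro x y hx hy g
    rw [smul_add, hx g, hy g]
  neg_mem' := by
    intro x hx g
    rw [smul_neg, hx g]

/-- The subgroup of `n`-th multiples of a group. -/
def nMultiples (n : ℕ) (M : Type) [AddCommGroup M] : AddSubgroup M :=
  AddMonoidHom.range
    { toFun := fun x : M => n • x
      map_zero' := smul_zero n
      map_add' := fun x y => smul_add n x y }

end VisibilityFramework

section VisibilityHom

variable {G : Type} [Group G] {J : Type} [AddCommGroup J] [DistribMulAction G J]

/-- A homomorphism whose kernel contains that of a surjective homomorphism `f` factors
through `f`. -/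
theorem AddMonoidHom.exists_comp_eq_of_surjective {L M N : Type*} [AddCommGroup L]
    [AddCommGroup M] [AddCommGroup N] (f : L →+ M) (hf : Function.Surjective f) (g : L →+ N)
    (h : ∀ l, f l = 0 → g l = 0) : ∃ k : M →+ N, ∀ l, k (f l) = g l :=
  ⟨f.liftOfSurjective hf ⟨g, fun l hl => h l hl⟩,
    fun l => f.liftOfRightInverse_comp_apply _ _ ⟨g, fun l hl => h l hl⟩ l⟩

theorem H1π_eq_zero_iff {A : AddSubgroup J} (f : oneCocycles G J A) :
    H1π G J A f = 0 ↔ ∃ a ∈ A, ∀ σ, (f : G → J) σ = σ • a - a :=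
  QuotientAddGroup.eq_zero_iff f

variable (G) in
/-- The homomorphism sending `y` to the map `σ ↦ σ • y - y`. -/
def coboundaryHom : J →+ (G → J) where
  toFun y σ := σ • y - y
  map_zero' := by ext; simp
  map_add' x y := by ext; simp only [smul_add, Pi.add_apply]; abel

variable (G) in
/-- The elements `y` of `B` such that `n • y` is fixed by `G`. -/
def fixedDivisionPoints (B : AddSubgroup J) (n : ℕ) : AddSubgroup J :=
  B ⊓ (fixedAddSubgroup G J).comap (nsmulAddMonoidHom n)

variable (G) in
/-- Multiplication by `n`, from the `y ∈ B` with `n • y` fixed to the fixed points of `B`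
modulo `n`. -/
def fixedDivisionPointsMulHom (B : AddSubgroup J) (n : ℕ) : fixedDivisionPoints G B n →+
    ↥(B ⊓ fixedAddSubgroup G J) ⧸ nMultiples n ↥(B ⊓ fixedAddSubgroup G J) :=
  (QuotientAddGroup.mk' _).comp
    (((nsmulAddMonoidHom n).comp (fixedDivisionPoints G B n).subtype).codRestrict _
      fun y => ⟨B.nsmul_mem y.2.1 n, y.2.2⟩)

theorem fixedDivisionPointsMulHom_eq_zero_iff {B : AddSubgroup J} {n : ℕ}
    (y : fixedDivisionPoints G B n) :
    fixedDivisionPointsMulHom G B n y = 0 ↔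
      ∃ b ∈ B ⊓ fixedAddSubgroup G J, n • b = n • (y : J) := by
  refine (QuotientAddGroup.eq_zero_iff _).trans ⟨?_, ?_⟩
  · rintro ⟨b, hb⟩
    exact ⟨b, b.2, congrArg Subtype.val hb⟩
  · rintro ⟨b, hb, h⟩
    exact ⟨⟨b, hb⟩, Subtype.ext h⟩

theorem fixedDivisionPointsMulHom_surjective {B : AddSubgroup J} {n : ℕ}
    (hdiv : ∀ b ∈ B, ∃ c ∈ B, n • c = b) :
    Function.Surjective (fixedDivisionPointsMulHom G B n) := by
  intro q
  obtain ⟨x, rfl⟩ := QuotientAddGroup.mk_surjective q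
  obtain ⟨y, hy, hyx⟩ := hdiv x x.2.1
  refine ⟨⟨y, hy, ?_⟩, congrArg QuotientAddGroup.mk (Subtype.ext hyx)⟩
  change n • y ∈ fixedAddSubgroup G J
  exact hyx ▸ x.2.2

theorem coboundaryHom_mem_oneCocycles {A B : AddSubgroup J} {n : ℕ}
    (hBstable : ∀ (g : G), ∀ b ∈ B, g • b ∈ B)
    (htors : ∀ b ∈ B, n • b = 0 → b ∈ A ⊓ B) {y : J} (hy : y ∈ fixedDivisionPoints G B n) :
    coboundaryHom G y ∈ oneCocycles G J A := by
  refine ⟨fun σ => (htors _ (B.sub_mem (hBstable σ y hy.1) hy.1) ?_).1, fun σ τ => ?_⟩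
  · have h : σ • (n • y) = n • y := hy.2 σ
    rw [smul_sub, ← smul_comm σ n y, h, sub_self]
  · change (σ * τ) • y - y = σ • y - y + σ • (τ • y - y)
    rw [mul_smul, smul_sub]
    abel

/-- The connecting homomorphism sending `y` to the class of `σ ↦ σ • y - y`. -/
noncomputable def fixedDivisionPointsH1Hom {A B : AddSubgroup J} {n : ℕ}
    (h : ∀ y ∈ fixedDivisionPoints G B n, coboundaryHom G y ∈ oneCocycles G J A) :
    fixedDivisionPoints G B n →+ AddMonoidHom.ker (H1map G J (le_top : A ≤ ⊤)) :=
  AddMonoidHom.codRestrict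
    (AddMonoidHom.comp (M := fixedDivisionPoints G B n) (N := oneCocycles G J A)
      (P := H1 G J A) (QuotientAddGroup.mk' _)
      (((coboundaryHom G).comp (fixedDivisionPoints G B n).subtype).codRestrict _
        fun y => h y y.2)) _
    fun y => (H1π_eq_zero_iff (A := (⊤ : AddSubgroup J)) _).2
      ⟨y, AddSubgroup.mem_top _, fun _ => rfl⟩

theorem fixedDivisionPointsH1Hom_eq_zero_iff {A B : AddSubgroup J} {n : ℕ}
    (h : ∀ y ∈ fixedDivisionPoints G B n, coboundaryHom G y ∈ oneCocycles G J A)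
    (y : fixedDivisionPoints G B n) :
    fixedDivisionPointsH1Hom h y = 0 ↔ ∃ a ∈ A, (y : J) - a ∈ fixedAddSubgroup G J := by
  rw [Subtype.ext_iff]
  refine (H1π_eq_zero_iff _).trans (exists_congr fun a => and_congr_right fun _ =>
    forall_congr' fun σ => ?_)
  change σ • (y : J) - y = σ • a - a ↔ σ • ((y : J) - a) = y - a
  rw [smul_sub, sub_eq_sub_iff_sub_eq_sub]

/-- Multiplication by `n` is onto on a finite `n`-torsion-free group. -/
theorem exists_nsmul_eq_of_finite {M : Type*} [AddCommGroup M] [Finite M] {n : ℕ}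
    (h : ∀ m : M, n • m = 0 → m = 0) (m : M) : ∃ m' : M, n • m' = m :=
  Finite.surjective_of_injective
    ((injective_iff_map_eq_zero (nsmulAddMonoidHom (α := M) n)).2 h) m

theorem exists_fixed_nsmul_eq {A B : AddSubgroup J} {n : ℕ} (hfin : Finite ↥(A ⊓ B))
    (hBG : ∀ b ∈ B, (∀ σ : G, σ • b = b) → n • b = 0 → b = 0) {c : J} (hc : c ∈ A ⊓ B)
    (hnc : n • c ∈ fixedAddSubgroup G J) :
    ∃ b ∈ B ⊓ fixedAddSubgroup G J, n • b = n • c := by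
  have : Finite ↥((A ⊓ B) ⊓ fixedAddSubgroup G J) :=
    Finite.of_injective _ (AddSubgroup.inclusion_injective (inf_le_left : _ ≤ A ⊓ B))
  obtain ⟨b, hb⟩ := exists_nsmul_eq_of_finite (M := ↥((A ⊓ B) ⊓ fixedAddSubgroup G J))
    (fun m hm => Subtype.ext (hBG m m.2.1.2 m.2.2 (congrArg Subtype.val hm)))
    ⟨n • c, (A ⊓ B).nsmul_mem hc n, hnc⟩
  exact ⟨b, ⟨b.2.1.2, b.2.2⟩, congrArg Subtype.val hb⟩

variable (G) in
/-- The pairs `(y, a)` with `y ∈ B`, `n • y` fixed, `a ∈ A` and `y - a` fixed. -/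
def splitDivisionPoints (A B : AddSubgroup J) (n : ℕ) :
    AddSubgroup (fixedDivisionPoints G B n × A) :=
  (fixedAddSubgroup G J).comap
    (((fixedDivisionPoints G B n).subtype.comp (AddMonoidHom.fst _ _)) -
      A.subtype.comp (AddMonoidHom.snd _ _))

variable (G) in
/-- The class of `y - a` modulo sums of fixed points of `A` and of `B`. -/
def splitDivisionPointsHom (A B : AddSubgroup J) (n : ℕ) : splitDivisionPoints G A B n →+
    (↥(fixedAddSubgroup G J) ⧸
      (A.addSubgroupOf (fixedAddSubgroup G J) ⊔ B.addSubgroupOf (fixedAddSubgroup G J))) :=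
  (QuotientAddGroup.mk' _).comp
    ((((((fixedDivisionPoints G B n).subtype.comp (AddMonoidHom.fst _ _)) -
      A.subtype.comp (AddMonoidHom.snd _ _))).comp
        (splitDivisionPoints G A B n).subtype).codRestrict _ fun z => z.2)

theorem splitDivisionPointsHom_eq_zero_iff {A B : AddSubgroup J} {n : ℕ}
    (htors : ∀ b ∈ B, n • b = 0 → b ∈ A ⊓ B) (hfin : Finite ↥(A ⊓ B))
    (hBG : ∀ b ∈ B, (∀ σ : G, σ • b = b) → n • b = 0 → b = 0)
    (z : splitDivisionPoints G A B n) :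
    splitDivisionPointsHom G A B n z = 0 ↔ fixedDivisionPointsMulHom G B n z.1.1 = 0 := by
  obtain ⟨⟨⟨y, hyB, hny⟩, a, ha⟩, hya⟩ := z
  replace hny : n • y ∈ fixedAddSubgroup G J := hny
  replace hya : y - a ∈ fixedAddSubgroup G J := hya
  rw [fixedDivisionPointsMulHom_eq_zero_iff]
  refine (QuotientAddGroup.eq_zero_iff _).trans (AddSubgroup.mem_sup.trans ⟨?_, ?_⟩)
  · rintro ⟨a', ha', b', hb', h⟩
    replace h : (a' : J) + b' = y - a := congrArg Subtype.val h
    have hc : y - (b' : J) = a + a' := by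
      rw [sub_eq_iff_eq_add, add_assoc, h, add_sub_cancel]
    obtain ⟨b, hb, hbn⟩ := exists_fixed_nsmul_eq (G := G) (c := y - b') hfin hBG
      ⟨hc ▸ A.add_mem ha ha', B.sub_mem hyB hb'⟩
      (by
        rw [smul_sub]
        exact AddSubgroup.sub_mem _ hny (AddSubgroup.nsmul_mem _ b'.2 n))
    refine ⟨b + b', AddSubgroup.add_mem _ hb ⟨hb', b'.2⟩, ?_⟩
    rw [smul_add, hbn, smul_sub, sub_add_cancel]
  · rintro ⟨b, hb, hbn⟩
    replace hbn : n • b = n • y := hbn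
    have ht : y - b ∈ A ⊓ B := htors _ (B.sub_mem hyB hb.1) (by rw [smul_sub, hbn, sub_self])
    have hfix : y - b - a ∈ fixedAddSubgroup G J := by
      rw [sub_right_comm]
      exact AddSubgroup.sub_mem _ hya hb.2
    refine ⟨⟨y - b - a, hfix⟩, A.sub_mem ht.1 ha, ⟨b, hb.2⟩, hb.1, Subtype.ext ?_⟩
    change y - b - a + b = y - a
    abel

end VisibilityHom

/-- **Visibility homomorphism.** Let `G` be a group, `J` an abelian group with an action of
`G` by group automorphisms, `A` and `B` two `G`-stable subgroups of `J` and `n ≥ 1`.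
Assume that `B` is `n`-divisible, that `B[n] ⊆ A ∩ B` with `A ∩ B` finite, that
`(B^G)[n] = 0` and that `((J/B)^G)[n] = 0`.  Then there is a group homomorphism
`φ : B^G/n·B^G → ker (H¹(G,A) → H¹(G,J))` sending the class of `x` to the class of the
cocycle `σ ↦ σ • y - y` where `n • y = x`, `y ∈ B`.  Moreover `ker φ` embeds into
`J^G/(A^G + B^G)`; in particular `φ` is injective whenever `J^G = A^G + B^G`. -/
theorem visibility_hom_exists
    (G : Type) [Group G] (J : Type) [AddCommGroup J] [DistribMulAction G J]
    (A B : AddSubgroup J)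
    (hAstable : ∀ (g : G), ∀ a ∈ A, g • a ∈ A)
    (hBstable : ∀ (g : G), ∀ b ∈ B, g • b ∈ B)
    (n : ℕ) (hn : 1 ≤ n)
    -- (i) `B` is `n`-divisible
    (hdiv : ∀ b ∈ B, ∃ c ∈ B, n • c = b)
    -- (ii) `B[n] ⊆ A ∩ B` and `A ∩ B` is finite
    (htors : ∀ b ∈ B, n • b = 0 → b ∈ A ⊓ B)
    (hfin : Finite ↥(A ⊓ B))
    -- (iii) `(B^G)[n] = 0`
    (hBG : ∀ b ∈ B, (∀ σ : G, σ • b = b) → n • b = 0 → b = 0)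
    -- (iv) `((J/B)^G)[n] = 0`
    (hJB : ∀ x : J, (∀ σ : G, σ • x - x ∈ B) → n • x ∈ B → x ∈ B) :
    ∃ φ : (↥(B ⊓ fixedAddSubgroup G J) ⧸ nMultiples n ↥(B ⊓ fixedAddSubgroup G J)) →+
        ↥(AddMonoidHom.ker (H1map G J (le_top : A ≤ ⊤))),
      -- `φ` sends the class of `x ∈ B^G` to the class of the cocycle `σ ↦ σ • y - y`,
      -- where `y ∈ B` is any element with `n • y = x`
      (∀ (x : ↥(B ⊓ fixedAddSubgroup G J)) (y : J), y ∈ B → n • y = (x : J) →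
        ∀ hz : (fun σ : G => σ • y - y) ∈ oneCocycles G J A,
          ((φ (QuotientAddGroup.mk x) : ↥(AddMonoidHom.ker (H1map G J (le_top : A ≤ ⊤)))) :
              H1 G J A) =
            H1π G J A ⟨fun σ : G => σ • y - y, hz⟩) ∧
      -- the kernel of `φ` is isomorphic to a subgroup of `J^G/(A^G + B^G)`
      (∃ ψ : ↥(AddMonoidHom.ker φ) →+
          (↥(fixedAddSubgroup G J) ⧸
            (A.addSubgroupOf (fixedAddSubgroup G J) ⊔ B.addSubgroupOf (fixedAddSubgroup G J))),
        Function.Injective ψ) ∧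
      -- in particular, `φ` is injective whenever `J^G = A^G + B^G`
      ((A.addSubgroupOf (fixedAddSubgroup G J) ⊔ B.addSubgroupOf (fixedAddSubgroup G J) = ⊤) →
        Function.Injective φ) := by
  have hcoc := fun y => coboundaryHom_mem_oneCocycles (G := G) (y := y) hBstable htors
  have hsurj := fixedDivisionPointsMulHom_surjective (G := G) hdiv
  obtain ⟨φ, hφ⟩ := AddMonoidHom.exists_comp_eq_of_surjective _ hsurj
    (fixedDivisionPointsH1Hom hcoc) (by
      intro y hy
      rw [fixedDivisionPointsMulHom_eq_zero_iff] at hy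
      obtain ⟨b, hb, hbn⟩ := hy
      rw [fixedDivisionPointsH1Hom_eq_zero_iff]
      refine ⟨y - b, (htors _ (B.sub_mem y.2.1 hb.1) ?_).1, ?_⟩
      · rw [smul_sub, hbn, sub_self]
      · rw [sub_sub_cancel]
        exact hb.2)
  have hψ : ∃ ψ : ↥(AddMonoidHom.ker φ) →+
      (↥(fixedAddSubgroup G J) ⧸
        (A.addSubgroupOf (fixedAddSubgroup G J) ⊔ B.addSubgroupOf (fixedAddSubgroup G J))),
      Function.Injective ψ := by
    let α : splitDivisionPoints G A B n →+ AddMonoidHom.ker φ :=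
      (((fixedDivisionPointsMulHom G B n).comp (AddMonoidHom.fst _ _)).comp
        (splitDivisionPoints G A B n).subtype).codRestrict _ fun z =>
          (hφ z.1.1).trans
            ((fixedDivisionPointsH1Hom_eq_zero_iff hcoc z.1.1).2 ⟨z.1.2, z.1.2.2, z.2⟩)
    have hα : Function.Surjective α := by
      rintro ⟨q, hq⟩
      obtain ⟨y, rfl⟩ := hsurj q
      obtain ⟨a, ha, hya⟩ :=
        (fixedDivisionPointsH1Hom_eq_zero_iff hcoc y).1 ((hφ y).symm.trans hq)
      exact ⟨⟨(y, ⟨a, ha⟩), hya⟩, rfl⟩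
    have hker (z) : splitDivisionPointsHom G A B n z = 0 ↔ α z = 0 := by
      rw [Subtype.ext_iff]
      exact splitDivisionPointsHom_eq_zero_iff htors hfin hBG z
    obtain ⟨ψ, hψ⟩ := AddMonoidHom.exists_comp_eq_of_surjective α hα
      (splitDivisionPointsHom G A B n) fun z => (hker z).2
    refine ⟨ψ, (injective_iff_map_eq_zero ψ).2 fun k hk => ?_⟩
    obtain ⟨z, rfl⟩ := hα k
    exact (hker z).1 ((hψ z).symm.trans hk)
  refine ⟨φ, ?_, hψ, fun htop => ?_⟩
  · intro x y hy hyx hz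
    have hy' : y ∈ fixedDivisionPoints G B n := by
      refine ⟨hy, ?_⟩
      change n • y ∈ fixedAddSubgroup G J
      exact hyx ▸ x.2.2
    have hx : fixedDivisionPointsMulHom G B n ⟨y, hy'⟩ = QuotientAddGroup.mk x :=
      congrArg QuotientAddGroup.mk (Subtype.ext hyx)
    rw [← hx, hφ]
    rfl
  · obtain ⟨ψ, hψ⟩ := hψ
    have := QuotientAddGroup.subsingleton_quotient_top (G := ↥(fixedAddSubgroup G J))
    rw [← htop] at this
    refine (injective_iff_map_eq_zero φ).2 fun q hq => ?_
    exact congrArg Subtype.val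
      (hψ (Subsingleton.elim (ψ ⟨q, hq⟩) (ψ 0)))
end

section
/- Let p be a prime and G a cyclic group of order p. Let M be a G-module whose underlying abelian group is a free ℤ_p-module of finite rank r, with G acting by ℤ_p-linear automorphisms, and let s denote the ℤ_p-rank of the fixed-point module M^G. Then H^1(G, M) is a finite elementary abelian p-group whose dimension as an 𝔽_p-vector space is at most (r − s)/(p − 1). -/
open scoped TensorProduct

section RepH1

variable {k : Type} [CommRing k] {G : Type} [Group G] {V : Type} [AddCommGroup V] [Module k V]

/-- The 1-cocycles of `G` with coefficients in the representation `ρ`. -/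
def repOneCocycles (ρ : Representation k G V) : Submodule k (G → V) where
  carrier := {f | ∀ σ τ, f (σ * τ) = f σ + ρ σ (f τ)}
  zero_mem' := by simp
  add_mem' := by
    intro f g hf hg σ τ
    simp only [Pi.add_apply, hf σ τ, hg σ τ, map_add]
    abel
  smul_mem' := by
    intro r f hf σ τ
    simp only [Pi.smul_apply, hf σ τ, map_smul, smul_add]

/-- The 1-coboundaries of `G` with coefficients in the representation `ρ`. -/
def repOneCoboundaries (ρ : Representation k G V) : Submodule k (G → V) where
  carrier := {f | ∃ v, ∀ σ, f σ = ρ σ v - v}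
  zero_mem' := ⟨0, by simp⟩
  add_mem' := by
    rintro f g ⟨v, hv⟩ ⟨w, hw⟩
    refine ⟨v + w, fun σ => ?_⟩
    simp only [Pi.add_apply, hv σ, hw σ, map_add]
    abel
  smul_mem' := by
    rintro r f ⟨v, hv⟩
    refine ⟨r • v, fun σ => ?_⟩
    simp only [Pi.smul_apply, hv σ, map_smul, smul_sub]

/-- The first group cohomology `H¹(G, ρ)`, defined as 1-cocycles modulo 1-coboundaries. -/
def repH1 (ρ : Representation k G V) : Type :=
  ↥(repOneCocycles ρ) ⧸
    (Submodule.comap (repOneCocycles ρ).subtype (repOneCoboundaries ρ))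

noncomputable instance (ρ : Representation k G V) : AddCommGroup (repH1 ρ) :=
  Submodule.Quotient.addCommGroup _

end RepH1

open Polynomial in
theorem exists_natCast_eq_X_pow_mul_add_mul_geom_sum {p : ℕ} (hp : p.Prime) :
    ∃ a b : ℤ[X], (p : ℤ[X]) = X ^ (p - 1) * a + b * ∑ i ∈ Finset.range p, (X + 1) ^ i := by
  obtain ⟨r, hr⟩ := exists_add_pow_prime_eq hp (X : ℤ[X]) 1
  have hpow : (X : ℤ[X]) ^ p = X * X ^ (p - 1) := by
    rw [← pow_succ', Nat.sub_add_cancel hp.one_le]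
  have hgeom : ∑ i ∈ Finset.range p, ((X : ℤ[X]) + 1) ^ i = X ^ (p - 1) + (p : ℤ[X]) * r := by
    apply mul_left_cancel₀ (X_ne_zero (R := ℤ))
    have h := mul_geom_sum ((X : ℤ[X]) + 1) p
    rw [add_sub_cancel_right, hr, hpow] at h
    rw [h]
    ring
  have hr0 : r.eval 0 = 1 := by
    have h := congrArg (eval 0) hgeom
    have hp1 : p - 1 ≠ 0 := by have := hp.two_le; omega
    simp only [eval_finsetSum, eval_pow, eval_add, eval_X, eval_one, zero_add, one_pow,
      Finset.sum_const, Finset.card_range, nsmul_eq_mul, mul_one, eval_mul, eval_natCast,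
      zero_pow hp1] at h
    have hp0 : (p : ℤ) ≠ 0 := by exact_mod_cast hp.ne_zero
    exact mul_left_cancel₀ hp0 (by rw [← h, mul_one])
  obtain ⟨v, hv⟩ : (X : ℤ[X]) ∣ 1 - r := by
    rw [X_dvd_iff, coeff_zero_eq_eval_zero, eval_sub, eval_one, hr0, sub_self]
  obtain ⟨c, hc⟩ := one_sub_dvd_one_sub_pow (X * v) (p - 1)
  have hrv : r = 1 - X * v := by rw [← hv]; ring
  rw [hgeom]
  refine ⟨(p : ℤ[X]) * v ^ (p - 1) - c, c, ?_⟩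
  rw [mul_pow, ← hrv] at hc
  linear_combination (p : ℤ[X]) * hc

/-- If `T` is annihilated by `1 + X + ⋯ + X ^ (p - 1)`, then `p` is a multiple of
`(T - 1) ^ (p - 1)` by an element commuting with `T - 1`. -/
theorem exists_natCast_eq_sub_one_pow_mul {E : Type*} [Ring E] {p : ℕ} (hp : p.Prime) {T : E}
    (hT : ∑ i ∈ Finset.range p, T ^ i = 0) :
    ∃ A : E, Commute (T - 1) A ∧ (p : E) = (T - 1) ^ (p - 1) * A := by
  obtain ⟨a, b, h⟩ := exists_natCast_eq_X_pow_mul_add_mul_geom_sum hp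
  have h' := congrArg (Polynomial.aeval (T - 1)) h
  simp only [map_natCast, map_add, map_mul, map_pow, map_sum, Polynomial.aeval_X, map_one,
    sub_add_cancel, hT, mul_zero, add_zero] at h'
  refine ⟨Polynomial.aeval (T - 1) a, ?_, h'⟩
  simpa using (Commute.all Polynomial.X a).map (Polynomial.aeval (R := ℤ) (T - 1))

theorem index_range_pow_of_injective {R K : Type*} [Ring R] [AddCommGroup K] [Module R K]
    {f : Module.End R K} (hf : Function.Injective f) (n : ℕ) :
    (LinearMap.range (f ^ n)).toAddSubgroup.index =
      (LinearMap.range f).toAddSubgroup.index ^ n := by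
  induction n with
  | zero =>
    have : (LinearMap.range (f ^ 0)).toAddSubgroup = ⊤ := by
      ext x
      simp
    rw [this, AddSubgroup.index_top, pow_zero]
  | succ n ih =>
    have hmap : (LinearMap.range (f ^ (n + 1))).toAddSubgroup =
        (LinearMap.range (f ^ n)).toAddSubgroup.map f.toAddMonoidHom := by
      ext x
      simp [pow_succ']
    rw [hmap, AddSubgroup.index_map_of_injective _ hf, ih, pow_succ]
    rfl

theorem index_range_natCast_padicInt {p : ℕ} [Fact p.Prime] {K : Type*} [AddCommGroup K]
    [Module ℤ_[p] K] [Module.Free ℤ_[p] K] [Module.Finite ℤ_[p] K] :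
    (LinearMap.range (p : Module.End ℤ_[p] K)).toAddSubgroup.index =
      p ^ Module.finrank ℤ_[p] K := by
  let b := Module.finBasis ℤ_[p] K
  let φ : K →+ (Fin (Module.finrank ℤ_[p] K) → ZMod p) :=
    ((PadicInt.toZMod (p := p)).toAddMonoidHom.compLeft _).comp
      b.equivFun.toLinearMap.toAddMonoidHom
  have hφ : ∀ x i, φ x i = PadicInt.toZMod (b.repr x i) := fun x i => rfl
  have hsurj : Function.Surjective φ := by
    intro y
    choose z hz using fun i => ZMod.ringHom_surjective (PadicInt.toZMod (p := p)) (y i)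
    refine ⟨b.equivFun.symm z, funext fun i => ?_⟩
    rw [hφ, ← b.equivFun_apply, LinearEquiv.apply_symm_apply, hz]
  have hker : (LinearMap.range (p : Module.End ℤ_[p] K)).toAddSubgroup = φ.ker := by
    ext x
    simp only [Submodule.mem_toAddSubgroup, LinearMap.mem_range, AddMonoidHom.mem_ker]
    constructor
    · rintro ⟨y, rfl⟩
      ext i
      simp [hφ, Module.End.natCast_apply]
    · intro hx
      have hdvd : ∀ i, ∃ c, b.repr x i = p * c := by
        intro i
        have : b.repr x i ∈ RingHom.ker (PadicInt.toZMod (p := p)) := by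
          rw [RingHom.mem_ker, ← hφ, hx, Pi.zero_apply]
        rwa [PadicInt.ker_toZMod, PadicInt.maximalIdeal_eq_span_p,
          Ideal.mem_span_singleton] at this
      choose c hc using hdvd
      refine ⟨b.equivFun.symm c, b.ext_elem fun i => ?_⟩
      rw [Module.End.natCast_apply, map_nsmul, Finsupp.smul_apply, ← b.equivFun_apply,
        LinearEquiv.apply_symm_apply, hc, nsmul_eq_mul]
  rw [hker, AddSubgroup.index_ker, AddMonoidHom.range_eq_top.mpr hsurj,
    Nat.card_congr AddSubgroup.topEquiv.toEquiv]
  simp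

theorem index_range_sub_one_pow_dvd {p : ℕ} [Fact p.Prime] {K : Type*} [AddCommGroup K]
    [Module ℤ_[p] K] [Module.Free ℤ_[p] K] [Module.Finite ℤ_[p] K] {T : Module.End ℤ_[p] K}
    (hT : ∑ i ∈ Finset.range p, T ^ i = 0) :
    (LinearMap.range (T - 1)).toAddSubgroup.index ^ (p - 1) ∣ p ^ Module.finrank ℤ_[p] K := by
  have hp : p.Prime := Fact.out
  obtain ⟨A, hcomm, hA⟩ := exists_natCast_eq_sub_one_pow_mul hp hT
  have hinj : Function.Injective (T - 1 : Module.End ℤ_[p] K) := by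
    rw [injective_iff_map_eq_zero]
    intro x hx
    have h : (p : Module.End ℤ_[p] K) x = 0 := by
      have hp1 : p - 1 ≠ 0 := by have := hp.two_le; omega
      rw [hA, (hcomm.pow_left _).eq, Module.End.mul_apply, ← Nat.sub_one_add_one hp1, pow_succ,
        Module.End.mul_apply, hx, map_zero, map_zero]
    rw [Module.End.natCast_apply, ← Nat.cast_smul_eq_nsmul ℤ_[p]] at h
    exact (smul_eq_zero.mp h).resolve_left (by exact_mod_cast hp.ne_zero)
  rw [← index_range_pow_of_injective hinj, ← index_range_natCast_padicInt]
  apply AddSubgroup.index_dvd_of_le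
  rintro _ ⟨y, rfl⟩
  exact ⟨A y, by rw [hA, Module.End.mul_apply]⟩

section CyclicGroup

variable {k : Type} [CommRing k] {G : Type} [Group G] {V : Type} [AddCommGroup V] [Module k V]
  {ρ : Representation k G V}

theorem repOneCocycles_apply_pow {f : G → V} (hf : f ∈ repOneCocycles ρ) (g : G) (n : ℕ) :
    f (g ^ n) = ∑ i ∈ Finset.range n, (ρ g ^ i) (f g) := by
  have hf' : ∀ σ τ, f (σ * τ) = f σ + ρ σ (f τ) := hf
  induction n with
  | zero => simpa using hf' 1 1
  | succ n ih => rw [pow_succ, hf', ih, Finset.sum_range_succ, map_pow]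

theorem mem_repOneCoboundaries_iff_of_generator [Finite G] {g : G}
    (hg : ∀ x, x ∈ Subgroup.zpowers g) {f : G → V} (hf : f ∈ repOneCocycles ρ) :
    f ∈ repOneCoboundaries ρ ↔ f g ∈ LinearMap.range (ρ g - 1) := by
  constructor
  · rintro ⟨v, hv⟩
    exact ⟨v, (hv g).symm⟩
  · rintro ⟨v, hv⟩
    refine ⟨v, fun σ => ?_⟩
    obtain ⟨n, rfl⟩ := mem_powers_iff_mem_zpowers.mpr (hg σ)
    have h := congrArg (fun F : Module.End k V => F v) (geom_sum_mul (ρ g) n)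
    simp only [Module.End.mul_apply, LinearMap.sum_apply, hv] at h
    simp only [repOneCocycles_apply_pow hf, h, map_pow]
    rfl

end CyclicGroup

theorem finrank_ker_add_finrank_invariants_le {p : ℕ} [Fact p.Prime] {G M : Type*} [Group G]
    [AddCommGroup M] [Module ℤ_[p] M] [Module.Free ℤ_[p] M] [Module.Finite ℤ_[p] M]
    (ρ : Representation ℤ_[p] G M) (g : G) :
    Module.finrank ℤ_[p] (LinearMap.ker (∑ i ∈ Finset.range p, ρ g ^ i)) +
      Module.finrank ℤ_[p] ρ.invariants ≤ Module.finrank ℤ_[p] M := by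
  set N : Module.End ℤ_[p] M := ∑ i ∈ Finset.range p, ρ g ^ i with hN
  have hrank := Submodule.finrank_quotient_add_finrank (LinearMap.ker N)
  rw [N.quotKerEquivRange.finrank_eq] at hrank
  rw [← hrank, add_comm]
  gcongr
  have hp : (p : ℤ_[p]) ≠ 0 := by exact_mod_cast (Fact.out : p.Prime).ne_zero
  have hNx : ∀ x ∈ ρ.invariants, N x = (p : ℤ_[p]) • x := by
    intro x hx
    have hi : ∀ i, (ρ g ^ i) x = x := fun i => by rw [← map_pow]; exact hx _
    simp [hN, LinearMap.sum_apply, hi, Nat.cast_smul_eq_nsmul]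
  refine LinearMap.finrank_le_finrank_of_injective
    (f := (N.comp ρ.invariants.subtype).codRestrict (LinearMap.range N) fun x => ⟨x, rfl⟩) ?_
  rw [injective_iff_map_eq_zero]
  intro x hx
  have h : N x = 0 := congrArg Subtype.val hx
  rw [hNx x x.2] at h
  exact Subtype.ext ((smul_eq_zero.mp h).resolve_left hp)

/-- Let `p` be a prime and `G` a cyclic group of order `p`.  Let `M` be a `G`-module whose
underlying abelian group is a free `ℤ_p`-module of finite rank `r`, with `G` acting by
`ℤ_p`-linear automorphisms, and let `s` be the `ℤ_p`-rank of the fixed-point module `M^G`.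
Then `H¹(G, M)` is a finite elementary abelian `p`-group whose dimension as an
`𝔽_p`-vector space is at most `(r − s)/(p − 1)`. -/
theorem repH1_finite_elementaryAbelian_card_le
    (p : ℕ) [Fact p.Prime] (G : Type) [Group G]
    (hcyc : IsCyclic G) (hcard : Nat.card G = p)
    (M : Type) [AddCommGroup M] [Module ℤ_[p] M]
    [Module.Free ℤ_[p] M] [Module.Finite ℤ_[p] M]
    (ρ : Representation ℤ_[p] G M) (r s : ℕ)
    (hr : Module.finrank ℤ_[p] M = r)
    (hs : Module.finrank ℤ_[p] ↥(Representation.invariants ρ) = s) :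
    Finite (repH1 ρ) ∧ (∀ x : repH1 ρ, p • x = 0) ∧
      Nat.card (repH1 ρ) ≤ p ^ ((r - s) / (p - 1)) := by
  have hp : p.Prime := Fact.out
  have hfin : Finite G := Nat.finite_of_card_ne_zero (hcard ▸ hp.ne_zero)
  obtain ⟨g, hg⟩ := hcyc.exists_generator
  set N : Module.End ℤ_[p] M := ∑ i ∈ Finset.range p, ρ g ^ i with hN
  have hcommN : ρ g * N = N * ρ g := by
    rw [hN, Finset.mul_sum, Finset.sum_mul]
    exact Finset.sum_congr rfl fun i _ => (pow_mul_comm' _ _).symm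
  have hmaps : ∀ x ∈ LinearMap.ker N, ρ g x ∈ LinearMap.ker N := by
    intro x hx
    rw [LinearMap.mem_ker] at hx ⊢
    rw [← Module.End.mul_apply, ← hcommN, Module.End.mul_apply, hx, map_zero]
  set T : Module.End ℤ_[p] (LinearMap.ker N) := (ρ g).restrict hmaps
  have hTpow : ∀ (i : ℕ) (x : LinearMap.ker N), ((T ^ i) x : M) = (ρ g ^ i) x := by
    intro i x
    induction i with
    | zero => rfl
    | succ i ih =>
      rw [pow_succ', pow_succ', Module.End.mul_apply, Module.End.mul_apply, ← ih]
      rfl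
  have hT : ∑ i ∈ Finset.range p, T ^ i = 0 := by
    ext x
    have hx : ∑ i ∈ Finset.range p, (ρ g ^ i) (x : M) = 0 := by
      rw [← LinearMap.sum_apply]
      exact x.2
    simp [LinearMap.sum_apply, hTpow, hx]
  have hindex := index_range_sub_one_pow_dvd hT
  have hmem : ∀ f ∈ repOneCocycles ρ, f g ∈ LinearMap.ker N := by
    intro f hf
    have h1 := repOneCocycles_apply_pow hf g 0
    have h := repOneCocycles_apply_pow hf g p
    have hgp : g ^ p = 1 := hcard ▸ pow_card_eq_one'
    rw [hgp] at h
    rw [pow_zero, Finset.range_zero, Finset.sum_empty] at h1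
    rw [LinearMap.mem_ker, hN, LinearMap.sum_apply, ← h, h1]
  let ev : repOneCocycles ρ →+ LinearMap.ker N :=
    { toFun := fun f => ⟨f.1 g, hmem f.1 f.2⟩
      map_zero' := rfl
      map_add' := fun _ _ => rfl }
  have hcob : (LinearMap.range (T - 1)).toAddSubgroup.comap ev ≤
      (Submodule.comap (repOneCocycles ρ).subtype (repOneCoboundaries ρ)).toAddSubgroup := by
    rintro f ⟨y, hy⟩
    exact (mem_repOneCoboundaries_iff_of_generator hg f.2).mpr ⟨y, congrArg Subtype.val hy⟩
  have hcardeq : Nat.card (repH1 ρ) =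
    (Submodule.comap (repOneCocycles ρ).subtype
      (repOneCoboundaries ρ)).toAddSubgroup.index := rfl
  have hdvd : Nat.card (repH1 ρ) ^ (p - 1) ∣
      p ^ Module.finrank ℤ_[p] (LinearMap.ker N) := by
    refine (pow_dvd_pow_of_dvd ?_ _).trans hindex
    rw [hcardeq]
    refine (AddSubgroup.index_dvd_of_le hcob).trans ?_
    rw [AddSubgroup.index_comap]
    exact AddSubgroup.relIndex_dvd_index_of_normal _ _
  have hp1 : p - 1 ≠ 0 := by have := hp.two_le; omega
  refine ⟨Nat.finite_of_card_ne_zero fun h0 => ?_, fun x => ?_, ?_⟩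
  · rw [h0, zero_pow hp1, zero_dvd_iff] at hdvd
    exact pow_ne_zero _ hp.ne_zero hdvd
  · obtain ⟨A, -, hA⟩ := exists_natCast_eq_sub_one_pow_mul hp hT
    obtain ⟨f, rfl⟩ := Submodule.Quotient.mk_surjective _ x
    refine (Submodule.Quotient.mk_eq_zero _ (x := p • f)).mpr (hcob ?_)
    refine ⟨((T - 1) ^ (p - 1 - 1) * A) (ev f), ?_⟩
    rw [← Module.End.mul_apply, ← mul_assoc, ← pow_succ', Nat.sub_one_add_one hp1, ← hA,
      Module.End.natCast_apply, map_nsmul]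
  · obtain ⟨m, -, hm⟩ := (Nat.dvd_prime_pow hp).mp ((dvd_pow_self _ hp1).trans hdvd)
    rw [hm, ← pow_mul, Nat.pow_dvd_pow_iff_le_right hp.one_lt] at hdvd
    rw [hm]
    refine Nat.pow_le_pow_right hp.pos ((Nat.le_div_iff_mul_le (by omega)).mpr ?_)
    have := finrank_ker_add_finrank_invariants_le ρ g
    rw [← hN] at this
    omega
end

section
/- Let p be a prime, Q a cyclic group of order p, and N a finitely generated abelian group with an action of Q by group automorphisms such that N has no p-torsion (i.e. N[p] = 0). Then H^1(Q, N) is a finite elementary abelian p-group whose dimension as an 𝔽_p-vector space is at most (rank_ℤ N − rank_ℤ N^Q)/(p − 1), where rank_ℤ denotes the rank of a finitely generated abelian group. -/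
open scoped TensorProduct

open Polynomial

theorem exists_geom_sum_eq_sub_one_pow_add (p : ℕ) (hp : p.Prime) : ∃ h : ℤ[X],
    ∑ i ∈ Finset.range p, (X : ℤ[X]) ^ i = (X - 1) ^ (p - 1) + (p : ℤ[X]) * (1 + (X - 1) * h) := by
  have : Fact p.Prime := ⟨hp⟩
  have hmod : (∑ i ∈ Finset.range p, (X : (ZMod p)[X]) ^ i) = (X - 1) ^ (p - 1) := by
    have hX : (X - 1 : (ZMod p)[X]) ≠ 0 := by simpa using X_sub_C_ne_zero (1 : ZMod p)
    apply mul_right_cancel₀ hX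
    rw [geom_sum_mul, ← pow_succ, Nat.sub_add_cancel hp.one_le, sub_pow_char, one_pow]
  obtain ⟨g, hg⟩ : C (p : ℤ) ∣ (∑ i ∈ Finset.range p, (X : ℤ[X]) ^ i) - (X - 1) ^ (p - 1) := by
    rw [C_dvd_iff_dvd_coeff]
    intro i
    rw [← ZMod.intCast_zmod_eq_zero_iff_dvd, ← eq_intCast (Int.castRingHom (ZMod p)), ← coeff_map]
    simp [Polynomial.map_sum, hmod]
  have hg1 : g.eval 1 = 1 := by
    have := congrArg (eval 1) hg
    have hp1 : p - 1 ≠ 0 := by have := hp.two_le; omega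
    simpa [eval_finsetSum, hp1, hp.ne_zero] using this.symm
  obtain ⟨h, hh⟩ : X - C 1 ∣ g - 1 := by
    rw [dvd_iff_isRoot]; simp [hg1]
  refine ⟨h, ?_⟩
  have : g = 1 + (X - 1) * h := by rw [C_1] at hh; rw [← hh]; ring
  rw [← this, ← sub_eq_iff_eq_add', hg]
  simp

theorem exists_nsmul_eq_of_isOfFinAddOrder (p : ℕ) (hp : p.Prime) {M : Type*} [AddCommGroup M]
    (htors : ∀ x : M, p • x = 0 → x = 0) {x : M} (hx : IsOfFinAddOrder x) : ∃ y, p • y = x := by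
  have hcop : (addOrderOf x).Coprime p := by
    rw [Nat.coprime_comm, hp.coprime_iff_not_dvd]
    rintro ⟨k, hk⟩
    have h0 : k • x = 0 := htors _ (by rw [← mul_smul, ← hk, addOrderOf_nsmul_eq_zero])
    have h1 := Nat.le_of_dvd (Nat.pos_of_ne_zero fun h => by
      have := hx.addOrderOf_pos; simp_all) (addOrderOf_dvd_of_nsmul_eq_zero h0)
    have := hx.addOrderOf_pos
    have := hp.two_le
    nlinarith
  obtain ⟨m, hm⟩ := exists_nsmul_eq_self_of_coprime hcop.symm
  exact ⟨m • x, by rw [smul_comm]; exact hm⟩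

theorem index_range_nsmul_of_free (p : ℕ) {F : Type*} [AddCommGroup F] [Module.Free ℤ F]
    [Module.Finite ℤ F] : (nsmulAddMonoidHom (α := F) p).range.index = p ^ Module.finrank ℤ F := by
  let b := Module.finBasis ℤ F
  let e : F ≃+ (Fin (Module.finrank ℤ F) → ℤ) := b.equivFun.toAddEquiv
  rw [← AddSubgroup.index_map_equiv _ e]
  have : AddSubgroup.map (e : F →+ (Fin (Module.finrank ℤ F) → ℤ))
      (nsmulAddMonoidHom (α := F) p).range =
      AddSubgroup.pi Set.univ fun _ => AddSubgroup.zmultiples (p : ℤ) := by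
    ext v
    simp only [AddSubgroup.mem_map, AddMonoidHom.mem_range, AddSubgroup.mem_pi,
      Int.mem_zmultiples_iff]
    constructor
    · rintro ⟨_, ⟨y, rfl⟩, rfl⟩ i -
      simp
    · intro h
      choose w hw using fun i => h i trivial
      refine ⟨_, ⟨e.symm w, rfl⟩, ?_⟩
      ext i
      simp [hw]
  rw [this, AddSubgroup.index_pi]
  simp

theorem index_range_nsmul (p : ℕ) (hp : p.Prime) {M : Type*} [AddCommGroup M] [Module.Finite ℤ M]
    (htors : ∀ x : M, p • x = 0 → x = 0) :
    (nsmulAddMonoidHom (α := M) p).range.index = p ^ Module.finrank ℤ M := by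
  let t := Submodule.torsion ℤ M
  have hq := Submodule.mkQ_surjective t
  rw [← AddSubgroup.index_map_eq (f := t.mkQ.toAddMonoidHom) _ hq]
  · rw [← finrank_quotient_eq_of_le_torsion (le_refl t), ← index_range_nsmul_of_free p]
    congr 1
    ext v
    simp only [AddSubgroup.mem_map, AddMonoidHom.mem_range]
    constructor
    · rintro ⟨_, ⟨y, rfl⟩, rfl⟩
      exact ⟨t.mkQ y, by simp⟩
    · rintro ⟨w, rfl⟩
      obtain ⟨y, rfl⟩ := hq w
      exact ⟨_, ⟨y, rfl⟩, by simp⟩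
  · intro x hx
    have hx : x ∈ t := by simpa using hx
    obtain ⟨y, hy⟩ := exists_nsmul_eq_of_isOfFinAddOrder p hp htors (x := x) (by
      obtain ⟨a, ha⟩ := (Submodule.mem_torsion_iff x).1 hx
      rw [isOfFinAddOrder_iff_zsmul_eq_zero]
      exact ⟨a, nonZeroDivisors.coe_ne_zero a, ha⟩)
    exact ⟨y, hy⟩

theorem index_range_pow {R M : Type*} [Ring R] [AddCommGroup M] [Module R M] (T : Module.End R M)
    (hT : Function.Injective T) (n : ℕ) :
    (T ^ n).range.toAddSubgroup.index = T.range.toAddSubgroup.index ^ n := by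
  induction n with
  | zero =>
    have : (LinearMap.range (1 : Module.End R M)).toAddSubgroup = ⊤ := by
      ext; simp
    simp [this]
  | succ n ih =>
    have h1 : (T ^ (n + 1)).range.toAddSubgroup =
        (T ^ n).range.toAddSubgroup.map T.toAddMonoidHom := by
      ext; simp [pow_succ']
    have h2 : T.range.toAddSubgroup = (⊤ : AddSubgroup M).map T.toAddMonoidHom := by
      ext; simp
    have hle : (T ^ (n + 1)).range.toAddSubgroup ≤ T.range.toAddSubgroup := by
      rw [h1, h2]; exact AddSubgroup.map_mono le_top
    rw [← AddSubgroup.relIndex_mul_index hle, pow_succ (AddSubgroup.index _), ← ih]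
    congr 1
    rw [h1, h2, AddSubgroup.relIndex_map_map_of_injective _ _ hT, AddSubgroup.relIndex_top_right]

theorem exists_prime_eq_geom_sum_mul_add (p : ℕ) (hp : p.Prime) : ∃ a b : ℤ[X],
    (p : ℤ[X]) = (∑ i ∈ Finset.range p, X ^ i) * a + (X - 1) ^ (p - 1) * b := by
  obtain ⟨h, hh⟩ := exists_geom_sum_eq_sub_one_pow_add p hp
  let S := ∑ i ∈ Finset.range (p - 1), (-((X - 1) * h)) ^ i
  have hS : S * (-((X - 1) * h) - 1) = (-((X - 1) * h)) ^ (p - 1) - 1 := geom_sum_mul _ _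
  have hpow : (-((X - 1) * h)) ^ (p - 1) = (X - 1) ^ (p - 1) * (-h) ^ (p - 1) := by
    rw [← mul_pow, mul_neg]
  refine ⟨S, p * (-h) ^ (p - 1) - S, ?_⟩
  rw [hh]
  rw [hpow] at hS
  linear_combination (p : ℤ[X]) * hS

section EndGeomSum

variable {p : ℕ} {M : Type*} [AddCommGroup M] {s : Module.End ℤ M}

theorem nsmul_mem_range_sub_one_pow (hp : p.Prime)
    (hs : ∑ i ∈ Finset.range p, s ^ i = 0) (x : M) :
    p • x ∈ ((s - 1) ^ (p - 1)).range := by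
  obtain ⟨a, b, hab⟩ := exists_prime_eq_geom_sum_mul_add p hp
  have h := congrArg (aeval s) hab
  simp only [map_add, map_mul, map_sum, map_pow, aeval_X, hs, zero_mul, zero_add, map_sub, map_one,
    map_natCast] at h
  exact ⟨aeval s b x, by rw [← Module.End.mul_apply, ← h]; simp⟩

theorem injective_sub_one_of_geom_sum_eq_zero (hs : ∑ i ∈ Finset.range p, s ^ i = 0)
    (htors : ∀ x : M, p • x = 0 → x = 0) :
    Function.Injective ⇑(s - 1) := by
  rw [injective_iff_map_eq_zero]
  intro x hx
  have hx : s x = x := by simpa [sub_eq_zero] using hx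
  have hpow (i : ℕ) : (s ^ i) x = x := by
    rw [Module.End.pow_apply]
    exact Function.iterate_fixed hx i
  apply htors
  simpa [LinearMap.sum_apply, hpow] using LinearMap.congr_fun hs x

theorem exists_index_range_sub_one_eq_pow [Module.Finite ℤ M] (hp : p.Prime)
    (hs : ∑ i ∈ Finset.range p, s ^ i = 0) (htors : ∀ x : M, p • x = 0 → x = 0) :
    ∃ a, a * (p - 1) ≤ Module.finrank ℤ M ∧ (s - 1).range.toAddSubgroup.index = p ^ a := by
  have hp1 : p - 1 ≠ 0 := by have := hp.two_le; omega
  have hle : (nsmulAddMonoidHom (α := M) p).range ≤ ((s - 1) ^ (p - 1)).range.toAddSubgroup := by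
    rintro _ ⟨x, rfl⟩
    exact nsmul_mem_range_sub_one_pow hp hs x
  have hdvd := AddSubgroup.index_dvd_of_le hle
  rw [index_range_pow _ (injective_sub_one_of_geom_sum_eq_zero hs htors),
    index_range_nsmul p hp htors] at hdvd
  obtain ⟨a, -, ha⟩ := (Nat.dvd_prime_pow hp).1 ((dvd_pow_self _ hp1).trans hdvd)
  refine ⟨a, ?_, ha⟩
  rwa [ha, ← pow_mul, Nat.pow_dvd_pow_iff_le_right hp.one_lt] at hdvd

end EndGeomSum

section OneCocycles

variable {k : Type} [CommRing k] {G : Type} [Group G] {V : Type} [AddCommGroup V] [Module k V]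
  {ρ : Representation k G V} {f : G → V}

theorem repOneCocycles_map_one (hf : f ∈ repOneCocycles ρ) : f 1 = 0 := by
  simpa using hf 1 1

theorem repOneCocycles_map_pow (hf : f ∈ repOneCocycles ρ) (σ : G) (n : ℕ) :
    f (σ ^ n) = (∑ i ∈ Finset.range n, ρ σ ^ i) (f σ) := by
  induction n with
  | zero => simp [repOneCocycles_map_one hf]
  | succ n ih => rw [pow_succ, hf, ih, Finset.sum_range_succ, LinearMap.add_apply, map_pow]

theorem repOneCocycles_eq_zero_of_generator (hf : f ∈ repOneCocycles ρ) {σ : G}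
    (hσ : ∀ τ, τ ∈ Subgroup.zpowers σ) (h0 : f σ = 0) : f = 0 := by
  let S : Subgroup G :=
    { carrier := {τ | f τ = 0}
      one_mem' := repOneCocycles_map_one hf
      mul_mem' := fun {a b} (ha : f a = 0) (hb : f b = 0) => by
        simp [hf a b, ha, hb]
      inv_mem' := fun {a} (ha : f a = 0) => by
        have h := hf a⁻¹ a
        rw [inv_mul_cancel, repOneCocycles_map_one hf, ha, map_zero, add_zero] at h
        exact h.symm }
  funext τ
  exact (Subgroup.zpowers_le (H := S)).2 h0 (hσ τ)

theorem mem_repOneCoboundaries_of_generator (hf : f ∈ repOneCocycles ρ) {σ : G}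
    (hσ : ∀ τ, τ ∈ Subgroup.zpowers σ) (h : f σ ∈ (ρ σ - 1).range) :
    f ∈ repOneCoboundaries ρ := by
  obtain ⟨v, hv⟩ := h
  have hg : (fun τ => ρ τ v - v) ∈ repOneCocycles ρ := fun a b => by
    simp only [map_mul, Module.End.mul_apply, map_sub]
    abel
  have h0 := repOneCocycles_eq_zero_of_generator (sub_mem hf hg) hσ
    (by simp [← hv])
  exact ⟨v, fun τ => sub_eq_zero.1 (congrFun h0 τ)⟩

end OneCocycles

theorem geom_sum_apply_of_mem_invariants {k G V : Type*} [CommRing k] [Group G] [AddCommGroup V]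
    [Module k V] (ρ : Representation k G V) (σ : G) (n : ℕ) {x : V} (hx : x ∈ ρ.invariants) :
    (∑ i ∈ Finset.range n, ρ σ ^ i) x = n • x := by
  simp_rw [← map_pow, LinearMap.sum_apply, hx _]
  simp

theorem finrank_ker_geom_sum_le {Q N : Type*} [Group Q] [AddCommGroup N] [Module.Finite ℤ N]
    (ρ : Representation ℤ Q N) (σ : Q) (p : ℕ) (htors : ∀ x : N, p • x = 0 → x = 0) :
    Module.finrank ℤ (∑ i ∈ Finset.range p, ρ σ ^ i).ker ≤
      Module.finrank ℤ N - Module.finrank ℤ ρ.invariants := by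
  have h1 := Submodule.finrank_quotient_add_finrank (∑ i ∈ Finset.range p, ρ σ ^ i).ker
  rw [(LinearMap.quotKerEquivRange _).finrank_eq] at h1
  have h2 : Module.finrank ℤ ρ.invariants ≤
      Module.finrank ℤ (∑ i ∈ Finset.range p, ρ σ ^ i).range := by
    refine LinearMap.finrank_le_finrank_of_injective
      (f := (∑ i ∈ Finset.range p, ρ σ ^ i).rangeRestrict ∘ₗ ρ.invariants.subtype) ?_
    rw [injective_iff_map_eq_zero]
    intro x hx
    refine Subtype.ext (htors _ ?_)
    rw [← geom_sum_apply_of_mem_invariants ρ σ p x.2]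
    exact congrArg Subtype.val hx
  omega

/-- Let `p` be a prime, `Q` a cyclic group of order `p`, and `N` a finitely generated
abelian group with an action of `Q` by group automorphisms (equivalently, a representation
of `Q` on the `ℤ`-module `N`) such that `N` has no `p`-torsion.  Then `H¹(Q, N)` is a
finite elementary abelian `p`-group whose dimension as an `𝔽_p`-vector space is at most
`(rank_ℤ N − rank_ℤ N^Q)/(p − 1)`. -/
theorem repH1_finite_elementaryAbelian_card_le_of_fg
    (p : ℕ) (hp : p.Prime)
    (Q : Type) [Group Q] (hcyc : IsCyclic Q) (hcard : Nat.card Q = p)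
    (N : Type) [AddCommGroup N] (hfg : AddGroup.FG N)
    (ρ : Representation ℤ Q N)
    (htors : ∀ x : N, p • x = 0 → x = 0) :
    Finite (repH1 ρ) ∧ (∀ x : repH1 ρ, p • x = 0) ∧
      Nat.card (repH1 ρ) ≤
        p ^ ((Module.finrank ℤ N - Module.finrank ℤ ↥(Representation.invariants ρ)) / (p - 1)) := by
  obtain ⟨σ, hσ⟩ := hcyc.exists_generator
  have : Module.Finite ℤ N := Module.Finite.iff_addGroup_fg.2 hfg
  have hσp : σ ^ p = 1 := hcard ▸ pow_card_eq_one'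
  let K := (∑ i ∈ Finset.range p, ρ σ ^ i).ker
  have hK : ∀ x ∈ K, ρ σ x ∈ K := by
    intro x hx
    have hcomm : Commute (∑ i ∈ Finset.range p, ρ σ ^ i) (ρ σ) :=
      Commute.sum_left _ _ _ fun i _ => (Commute.refl _).pow_left i
    rw [LinearMap.mem_ker, ← Module.End.mul_apply, hcomm.eq, Module.End.mul_apply,
      LinearMap.mem_ker.1 hx, map_zero]
  let s : Module.End ℤ K := (ρ σ).restrict hK
  have hs : ∑ i ∈ Finset.range p, s ^ i = 0 := by
    ext x
    have hpow (i : ℕ) : ((s ^ i) x : N) = (ρ σ ^ i) x := by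
      rw [Module.End.pow_restrict]
      rfl
    calc ((∑ i ∈ Finset.range p, s ^ i) x : N) = (∑ i ∈ Finset.range p, ρ σ ^ i) x := by
          simp only [LinearMap.sum_apply, AddSubmonoidClass.coe_finsetSum, hpow]
      _ = 0 := x.2
  have htorsK (x : K) (hx : p • x = 0) : x = 0 :=
    Subtype.ext (htors _ (congrArg Subtype.val hx))
  obtain ⟨a, ha, hindex⟩ := exists_index_range_sub_one_eq_pow hp hs htorsK
  let S : AddSubgroup N := (ρ σ - 1).range.toAddSubgroup
  have hrange (y : K) (hy : y ∈ (s - 1).range) : (y : N) ∈ S := by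
    obtain ⟨x, rfl⟩ := hy
    exact ⟨x, rfl⟩
  have hrel : S.relIndex K.toAddSubgroup ≤ p ^ a ∧ S.relIndex K.toAddSubgroup ≠ 0 := by
    have hdvd : S.relIndex K.toAddSubgroup ∣ p ^ a :=
      hindex ▸ AddSubgroup.index_dvd_of_le fun y hy => hrange y hy
    have hpos : 0 < p ^ a := pow_pos hp.pos a
    exact ⟨Nat.le_of_dvd hpos hdvd, fun h0 => hpos.ne' (zero_dvd_iff.1 (h0 ▸ hdvd))⟩
  have hmemK {f : Q → N} (hf : f ∈ repOneCocycles ρ) : f σ ∈ K := by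
    rw [LinearMap.mem_ker, ← repOneCocycles_map_pow hf, hσp, repOneCocycles_map_one hf]
  let ev : repOneCocycles ρ →+ N :=
    ((LinearMap.proj σ).comp (repOneCocycles ρ).subtype).toAddMonoidHom
  let B := Submodule.comap (repOneCocycles ρ).subtype (repOneCoboundaries ρ)
  have hB : S.comap ev ≤ B.toAddSubgroup := fun f hf =>
    mem_repOneCoboundaries_of_generator f.2 hσ hf
  have hev : ev.range ≤ K.toAddSubgroup := by
    rintro _ ⟨f, rfl⟩
    exact hmemK f.2
  have hcomap : (S.comap ev).index ≤ p ^ a ∧ (S.comap ev).index ≠ 0 := by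
    rw [AddSubgroup.index_comap]
    exact ⟨(AddSubgroup.relIndex_le_of_le_right hev hrel.2).trans hrel.1,
      fun h0 => hrel.2 (AddSubgroup.relIndex_eq_zero_of_le_right hev h0)⟩
  have hdvdB := AddSubgroup.index_dvd_of_le hB
  have hB0 : B.toAddSubgroup.index ≠ 0 := fun h0 =>
    hcomap.2 (zero_dvd_iff.1 (h0 ▸ hdvdB))
  refine ⟨AddSubgroup.index_ne_zero_iff_finite.1 hB0, fun x => ?_, ?_⟩
  · obtain ⟨f, rfl⟩ := Submodule.mkQ_surjective B x
    refine (Submodule.Quotient.mk_eq_zero B (x := p • f)).2 ?_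
    refine hB (?_ : ev (p • f) ∈ S)
    rw [map_nsmul]
    refine hrange (p • ⟨f.1 σ, hmemK f.2⟩) ?_
    have hp1 : p - 1 ≠ 0 := by have := hp.two_le; omega
    obtain ⟨y, hy⟩ := nsmul_mem_range_sub_one_pow hp hs ⟨f.1 σ, hmemK f.2⟩
    refine ⟨((s - 1) ^ (p - 1 - 1)) y, ?_⟩
    rw [← hy, ← Module.End.mul_apply, mul_pow_sub_one hp1]
  · calc Nat.card (repH1 ρ) = B.toAddSubgroup.index := rfl
      _ ≤ p ^ a := (Nat.le_of_dvd (Nat.pos_of_ne_zero hcomap.2) hdvdB).trans hcomap.1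
      _ ≤ _ := by
        refine Nat.pow_le_pow_right hp.pos ?_
        rw [Nat.le_div_iff_mul_le (by have := hp.two_le; omega)]
        exact ha.trans (finrank_ker_geom_sum_le ρ σ p htors)
end
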